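/- arXiv:2503.18436 — 2 statements merged into one kernel-verified Lean document; each statement's English description precedes it below -/
import Mathlib

section
/- Let S ∈ ℕ, z ∈ ℝ^S, q̂ ∈ Δ_S, θ > 0, and p ≥ 1 with conjugate exponent p_* (1/p + 1/p_* = 1). Then the optimal value of the problem max{zᵀq : q ∈ ℝ₊^S, eᵀq = 1, ‖q − q̂‖_p ≤ θ} equals the optimal value of the problem min{q̂ᵀ(z + γ·e + η) + βθ − γ : β ∈ ℝ₊, γ ∈ ℝ, η ∈ ℝ₊^S, ‖z + γ·e + η‖_{p_*} ≤ β}, and the maximum in the first problem is attained. -/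
open scoped ENNReal

/-- The `ℓ_p` norm on `ℝ^S`. -/
noncomputable def lpNorm {S : ℕ} (p : ℝ≥0∞) [Fact (1 ≤ p)] (x : Fin S → ℝ) : ℝ :=
  ‖(WithLp.equiv p (Fin S → ℝ)).symm x‖

section lpNorm

variable {S : ℕ} {p pd : ℝ≥0∞} [Fact (1 ≤ p)] [Fact (1 ≤ pd)]

lemma lpNorm_nonneg (x : Fin S → ℝ) : 0 ≤ lpNorm p x := norm_nonneg _

lemma lpNorm_zero : lpNorm p (0 : Fin S → ℝ) = 0 :=
  norm_zero (E := PiLp p fun _ : Fin S => ℝ)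

lemma lpNorm_add_le (x y : Fin S → ℝ) : lpNorm p (x + y) ≤ lpNorm p x + lpNorm p y :=
  norm_add_le (WithLp.toLp p x) (WithLp.toLp p y)

lemma lpNorm_smul (c : ℝ) (x : Fin S → ℝ) : lpNorm p (c • x) = |c| * lpNorm p x :=
  norm_smul c (WithLp.toLp p x)

lemma continuous_lpNorm : Continuous (lpNorm p : (Fin S → ℝ) → ℝ) :=
  continuous_norm.comp (PiLp.continuous_toLp p fun _ : Fin S => ℝ)

lemma convexOn_lpNorm : ConvexOn ℝ Set.univ (lpNorm p : (Fin S → ℝ) → ℝ) := by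
  refine ⟨convex_univ, fun x _ y _ a b ha hb _ => (lpNorm_add_le _ _).trans_eq ?_⟩
  simp [lpNorm_smul, abs_of_nonneg ha, abs_of_nonneg hb]

lemma lpNorm_one (x : Fin S → ℝ) : lpNorm 1 x = ∑ i, |x i| :=
  PiLp.norm_eq_of_L1 (WithLp.toLp 1 x)

lemma lpNorm_top (x : Fin S → ℝ) : lpNorm ∞ x = ⨆ i, |x i| :=
  PiLp.norm_eq_ciSup (WithLp.toLp ∞ x)

lemma lpNorm_eq_sum (h : 0 < p.toReal) (x : Fin S → ℝ) :
    lpNorm p x = (∑ i, |x i| ^ p.toReal) ^ (1 / p.toReal) :=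
  PiLp.norm_eq_sum h (WithLp.toLp p x)

lemma sum_mul_le_lpNorm_one_mul_lpNorm_top (x y : Fin S → ℝ) :
    ∑ i, x i * y i ≤ lpNorm 1 x * lpNorm ∞ y := by
  rw [lpNorm_one, lpNorm_top, Finset.sum_mul]
  refine Finset.sum_le_sum fun i _ => (le_abs_self _).trans ?_
  rw [abs_mul]
  gcongr
  exact le_ciSup (f := fun i => |y i|) (Set.finite_range _).bddAbove i

/-- **Hölder's inequality** for conjugate `ℓ_p` norms, endpoints included. -/
lemma sum_mul_le_lpNorm_mul_lpNorm (h : p.HolderConjugate pd) (x y : Fin S → ℝ) :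
    ∑ i, x i * y i ≤ lpNorm p x * lpNorm pd y := by
  by_cases hp : p = ∞
  · subst hp
    obtain rfl : pd = 1 := by simpa using ENNReal.holderConjugate_iff.1 h
    simpa [mul_comm] using sum_mul_le_lpNorm_one_mul_lpNorm_top y x
  by_cases hpd : pd = ∞
  · subst hpd
    obtain rfl : p = 1 := by simpa using ENNReal.holderConjugate_iff.1 h
    exact sum_mul_le_lpNorm_one_mul_lpNorm_top x y
  have hr := ENNReal.HolderConjugate.toReal_of_ne_top hp hpd
  rw [lpNorm_eq_sum hr.pos, lpNorm_eq_sum hr.symm.pos]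
  exact Real.inner_le_Lp_mul_Lq _ x y hr

/-- The dual norm is attained: some `w` in the unit `ℓ_p` ball pairs with `f` to `‖f‖_{p_*}`. -/
lemma exists_sum_mul_eq_lpNorm (h : p.HolderConjugate pd) (f : Fin S → ℝ) :
    ∃ w : Fin S → ℝ, lpNorm p w ≤ 1 ∧ ∑ i, f i * w i = lpNorm pd f := by
  rcases isEmpty_or_nonempty (Fin S) with hS | hS
  · exact ⟨0, by simp [lpNorm_zero], by
      rw [Subsingleton.elim f 0, lpNorm_zero]; simp⟩
  have sign_le (t : ℝ) : |(SignType.sign t : ℝ)| ≤ 1 := by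
    rcases lt_trichotomy t 0 with ht | rfl | ht <;> simp [*]
  by_cases hp : p = ∞
  · subst hp
    obtain rfl : pd = 1 := by simpa using ENNReal.holderConjugate_iff.1 h
    refine ⟨fun i => SignType.sign (f i), ?_, ?_⟩
    · rw [lpNorm_top]
      exact ciSup_le fun i => sign_le _
    · simp [lpNorm_one, self_mul_sign]
  by_cases hpd : pd = ∞
  · subst hpd
    obtain rfl : p = 1 := by simpa using ENNReal.holderConjugate_iff.1 h
    obtain ⟨s, hs⟩ := exists_eq_ciSup_of_finite (f := fun i => |f i|)
    refine ⟨Pi.single s (SignType.sign (f s) : ℝ), ?_, ?_⟩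
    · rw [lpNorm_one, Finset.sum_eq_single s (by simp +contextual) (by simp)]
      simpa using sign_le (f s)
    · rw [lpNorm_top, ← hs, Finset.sum_eq_single s (by simp +contextual) (by simp)]
      simp [self_mul_sign]
  have hr := ENNReal.HolderConjugate.toReal_of_ne_top hp hpd
  obtain ⟨g, hg, hfg⟩ := (NNReal.isGreatest_Lp Finset.univ (fun i => ‖f i‖₊) hr.symm).1
  refine ⟨fun i => SignType.sign (f i) * g i, ?_, ?_⟩
  · rw [lpNorm_eq_sum hr.pos]
    refine Real.rpow_le_one (by positivity) ?_ (by have := hr.pos; positivity)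
    have hg' : ∑ i, (g i : ℝ) ^ p.toReal ≤ 1 := by exact_mod_cast hg
    refine le_trans (Finset.sum_le_sum fun i _ => ?_) hg'
    refine Real.rpow_le_rpow (abs_nonneg _) ?_ hr.pos.le
    rw [abs_mul, NNReal.abs_eq]
    exact mul_le_of_le_one_left (g i).2 (sign_le _)
  · rw [lpNorm_eq_sum hr.symm.pos]
    have := congrArg ((↑) : NNReal → ℝ) hfg
    push_cast at this
    simp only [Real.norm_eq_abs] at this
    rw [← this]
    exact Finset.sum_congr rfl fun i _ => by rw [← mul_assoc, self_mul_sign]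

/-- A linear upper bound on the open `ℓ_p` ball of radius `θ` times a ray `(v, ∞)`
bounds the dual norm of the functional. -/
lemma add_mul_lpNorm_add_le_of_forall_ball (h : p.HolderConjugate pd) {θ : ℝ} (hθ : 0 < θ)
    {f x₀ : Fin S → ℝ} {c u v : ℝ}
    (hlt : ∀ w r, lpNorm p (w - x₀) < θ → v < r → ∑ i, f i * w i + c * r < u) :
    ∑ i, f i * x₀ i + θ * lpNorm pd f + c * v ≤ u := by
  obtain ⟨w, hw, hfw⟩ := exists_sum_mul_eq_lpNorm h f
  have key : ∀ δ ∈ Set.Ioo (0 : ℝ) 1,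
      ∑ i, f i * x₀ i + (1 - δ) * θ * lpNorm pd f + c * (v + δ) ≤ u := by
    rintro δ ⟨hδ₀, hδ₁⟩
    have h1 : 0 < (1 - δ) * θ := mul_pos (by linarith) hθ
    refine le_of_eq_of_le ?_ (hlt (x₀ + ((1 - δ) * θ) • w) (v + δ) ?_ (by linarith)).le
    · rw [← hfw, Finset.mul_sum, ← Finset.sum_add_distrib]
      congr 1
      refine Finset.sum_congr rfl fun i _ => ?_
      simp only [Pi.add_apply, Pi.smul_apply, smul_eq_mul]
      ring
    · rw [add_sub_cancel_left, lpNorm_smul, abs_of_pos h1]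
      nlinarith
  have hcont : Filter.Tendsto
      (fun δ : ℝ => ∑ i, f i * x₀ i + (1 - δ) * θ * lpNorm pd f + c * (v + δ))
      (nhdsWithin 0 (Set.Ioi 0)) (nhds (∑ i, f i * x₀ i + θ * lpNorm pd f + c * v)) := by
    refine tendsto_nhdsWithin_of_tendsto_nhds ?_
    have : Continuous
        (fun δ : ℝ => ∑ i, f i * x₀ i + (1 - δ) * θ * lpNorm pd f + c * (v + δ)) := by fun_prop
    simpa using this.tendsto 0
  refine le_of_tendsto hcont ?_
  filter_upwards [Ioo_mem_nhdsGT (zero_lt_one' ℝ)] with δ hδ using key δ hδ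

end lpNorm

section Duality

variable {S : ℕ} {p pd : ℝ≥0∞} [Fact (1 ≤ p)] [Fact (1 ≤ pd)] {z qhat : Fin S → ℝ} {θ : ℝ}

/-- Weak duality. -/
lemma sum_mul_le_dual_value (h : p.HolderConjugate pd) (hθ : 0 < θ) {q η : Fin S → ℝ} {β γ : ℝ}
    (hq₀ : ∀ s, 0 ≤ q s) (hq₁ : ∑ s, q s = 1) (hqθ : lpNorm p (q - qhat) ≤ θ)
    (hη : ∀ s, 0 ≤ η s) (hβ : lpNorm pd (fun s => z s + γ + η s) ≤ β) :
    ∑ s, z s * q s ≤ ∑ s, qhat s * (z s + γ + η s) + β * θ - γ := by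
  have hH := sum_mul_le_lpNorm_mul_lpNorm h (q - qhat) (fun s => z s + γ + η s)
  have hle : lpNorm p (q - qhat) * lpNorm pd (fun s => z s + γ + η s) ≤ θ * β :=
    mul_le_mul hqθ hβ (lpNorm_nonneg _) hθ.le
  have hηq : 0 ≤ ∑ s, η s * q s := Finset.sum_nonneg fun s _ => mul_nonneg (hη s) (hq₀ s)
  have hsplit : ∑ s, (q - qhat) s * (z s + γ + η s) =
      ∑ s, z s * q s + γ * ∑ s, q s + ∑ s, η s * q s - ∑ s, qhat s * (z s + γ + η s) := by
    rw [Finset.mul_sum, ← Finset.sum_add_distrib, ← Finset.sum_add_distrib,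
      ← Finset.sum_sub_distrib]
    refine Finset.sum_congr rfl fun s _ => ?_
    simp only [Pi.sub_apply]
    ring
  rw [hq₁] at hsplit
  linarith

/-- Strong duality: an upper bound on the primal values is dominated by a dual value. -/
lemma exists_dual_value_le (h : p.HolderConjugate pd) (hθ : 0 < θ)
    (hqhat : qhat ∈ stdSimplex ℝ (Fin S)) {v : ℝ}
    (hv : ∀ q ∈ stdSimplex ℝ (Fin S), lpNorm p (q - qhat) ≤ θ → ∑ s, z s * q s ≤ v) :
    ∃ (γ : ℝ) (η : Fin S → ℝ), (∀ s, 0 ≤ η s) ∧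
      ∑ s, qhat s * (z s + γ + η s) + lpNorm pd (fun s => z s + γ + η s) * θ - γ ≤ v := by
  let B : Set ((Fin S → ℝ) × ℝ) := {w | lpNorm p (w - qhat) < θ} ×ˢ Set.Ioi v
  let A : Set ((Fin S → ℝ) × ℝ) := (LinearMap.prod LinearMap.id
    (Fintype.linearCombination ℝ z : (Fin S → ℝ) →ₗ[ℝ] ℝ)) '' stdSimplex ℝ (Fin S)
  have hBo : IsOpen B := (isOpen_lt (continuous_lpNorm.comp (continuous_id.sub continuous_const))
    continuous_const).prod isOpen_Ioi
  have hBc : Convex ℝ B := by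
    refine Convex.prod ?_ (convex_Ioi v)
    have := (convexOn_lpNorm (p := p) (S := S)).translate_right (-qhat)
    simpa [add_comm, sub_eq_add_neg, Function.comp_def] using this.convex_lt θ
  have hAc : Convex ℝ A := (convex_stdSimplex ℝ _).linear_image _
  have hdisj : Disjoint B A := by
    rw [Set.disjoint_left]
    rintro _ ⟨hw, hr⟩ ⟨q, hq, rfl⟩
    have := hv q hq (le_of_lt hw)
    simp [Fintype.linearCombination_apply, mul_comm] at hr
    linarith
  obtain ⟨F, u, hFB, hFA⟩ := geometric_hahn_banach_open hBc hBo hAc hdisj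
  let f : Fin S → ℝ := fun s => F (Pi.single s 1, 0)
  let c : ℝ := F (0, 1)
  have hF (w : Fin S → ℝ) (r : ℝ) : F (w, r) = ∑ s, f s * w s + c * r := by
    have h1 : (w, r) = (∑ s, w s • ((Pi.single s 1, 0) : (Fin S → ℝ) × ℝ)) + r • (0, 1) := by
      ext s
      · simp [Prod.fst_sum, Finset.sum_apply, Pi.single_apply]
      · simp [Prod.snd_sum]
    rw [h1, map_add, map_sum]
    simp only [map_smul, smul_eq_mul, f, c, mul_comm]
  have hA (q : Fin S → ℝ) (hq : q ∈ stdSimplex ℝ (Fin S)) :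
      u ≤ ∑ s, f s * q s + c * ∑ s, z s * q s := by
    have := hFA _ ⟨q, hq, rfl⟩
    simpa [hF, Fintype.linearCombination_apply, mul_comm] using this
  have hB (w : Fin S → ℝ) (r : ℝ) (hw : lpNorm p (w - qhat) < θ) (hr : v < r) :
      ∑ s, f s * w s + c * r < u := hF w r ▸ hFB (w, r) ⟨hw, hr⟩
  have hc : c < 0 := by
    have h1 := hA qhat hqhat
    have h2 := hB qhat (v + 1) (by simpa [lpNorm_zero] using hθ) (by linarith)
    have h3 := hv qhat hqhat (by simpa [lpNorm_zero] using hθ.le)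
    by_contra! h4
    nlinarith
  have hball := add_mul_lpNorm_add_le_of_forall_ball h hθ hB
  have hl : 0 < (-c)⁻¹ := inv_pos.2 (by linarith)
  have hlc : (-c)⁻¹ * c = -1 := by rw [inv_neg, neg_mul, inv_mul_cancel₀ hc.ne]
  have hfun (s : Fin S) :
      z s + (-c)⁻¹ * u + ((-c)⁻¹ * f s - z s - (-c)⁻¹ * u) = (-c)⁻¹ * f s := by ring
  refine ⟨(-c)⁻¹ * u, fun s => (-c)⁻¹ * f s - z s - (-c)⁻¹ * u, fun s => ?_, ?_⟩
  · have h1 := hA (Pi.single s 1) (single_mem_stdSimplex ℝ s)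
    simp only [Pi.single_apply, mul_ite, mul_one, mul_zero, Finset.sum_ite_eq',
      Finset.mem_univ, if_true] at h1
    have h2 := mul_le_mul_of_nonneg_left h1 hl.le
    have h3 : (-c)⁻¹ * (c * z s) = -z s := by rw [← mul_assoc, hlc, neg_one_mul]
    show 0 ≤ (-c)⁻¹ * f s - z s - (-c)⁻¹ * u
    linarith
  · simp only [hfun]
    have h1 : lpNorm pd (fun s => (-c)⁻¹ * f s) = (-c)⁻¹ * lpNorm pd f := by
      rw [← abs_of_pos hl, ← lpNorm_smul, abs_of_pos hl]
      rfl
    have h2 : ∑ s, qhat s * ((-c)⁻¹ * f s) = (-c)⁻¹ * ∑ s, f s * qhat s := by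
      rw [Finset.mul_sum]
      exact Finset.sum_congr rfl fun s _ => by ring
    rw [h1, h2]
    have h3 := mul_le_mul_of_nonneg_left hball hl.le
    have h4 : (-c)⁻¹ * (c * v) = -v := by rw [← mul_assoc, hlc, neg_one_mul]
    linarith

end Duality

/-- Duality for the maximization over weight vectors
(Proposition on the dual of `max_{q ∈ Q} zᵀq` in the paper). -/
theorem weight_maximization_duality
    (S : ℕ) (hS : 0 < S) (z qhat : Fin S → ℝ)
    (hqhat₀ : ∀ s, 0 ≤ qhat s) (hqhat₁ : ∑ s, qhat s = 1)
    (θ : ℝ) (hθ : 0 < θ)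
    (p pd : ℝ≥0∞) [Fact (1 ≤ p)] [Fact (1 ≤ pd)] (hp : 1 ≤ p) (hpq : 1 / p + 1 / pd = 1) :
    ∃ val : ℝ,
      IsGreatest {r : ℝ | ∃ q : Fin S → ℝ, (∀ s, 0 ≤ q s) ∧ ∑ s, q s = 1 ∧
        lpNorm p (q - qhat) ≤ θ ∧ r = ∑ s, z s * q s} val ∧
      val = sInf {r : ℝ | ∃ (β γ : ℝ) (η : Fin S → ℝ), 0 ≤ β ∧ (∀ s, 0 ≤ η s) ∧
        lpNorm pd (fun s => z s + γ + η s) ≤ β ∧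
        r = ∑ s, qhat s * (z s + γ + η s) + β * θ - γ} := by
  have h : p.HolderConjugate pd := ENNReal.holderConjugate_iff.2 (by simpa using hpq)
  have hmem : qhat ∈ stdSimplex ℝ (Fin S) := ⟨hqhat₀, hqhat₁⟩
  have hK : IsCompact (stdSimplex ℝ (Fin S) ∩ {q | lpNorm p (q - qhat) ≤ θ}) :=
    (isCompact_stdSimplex ℝ _).inter_right
      (isClosed_le (continuous_lpNorm.comp (continuous_id.sub continuous_const)) continuous_const)
  obtain ⟨q, ⟨hq, hqθ⟩, hmax⟩ := hK.exists_isMaxOn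
    ⟨qhat, hmem, by simpa [lpNorm_zero] using hθ.le⟩
    (f := fun q => ∑ s, z s * q s) (by fun_prop)
  refine ⟨∑ s, z s * q s, ⟨⟨q, hq.1, hq.2, hqθ, rfl⟩, ?_⟩, (IsLeast.csInf_eq ⟨?_, ?_⟩).symm⟩
  · rintro _ ⟨q', h₀, h₁, hθ', rfl⟩
    exact hmax ⟨⟨h₀, h₁⟩, hθ'⟩
  · obtain ⟨γ, η, hη, hle⟩ := exists_dual_value_le h hθ hmem fun q' hq' hθ' => hmax ⟨hq', hθ'⟩
    exact ⟨_, γ, η, lpNorm_nonneg _, hη, le_rfl,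
      (sum_mul_le_dual_value h hθ hq.1 hq.2 hqθ hη le_rfl).antisymm hle⟩
  · rintro _ ⟨β, γ, η, -, hη, hβ, rfl⟩
    exact sum_mul_le_dual_value h hθ hq.1 hq.2 hqθ hη hβ
end

section
/- Let ‖·‖ be a norm on ℝ^n, κ > 0, ε ∈ [0, 1], and let N(x, y) = ‖x‖ + κ|y| denote the associated norm on ℝ^n × ℝ with dual norm N_*. Let Ξ = {(x, y) ∈ ℝ^n × ℝ : C₁x + c₂y ≤ d} with C₁ ∈ ℝ^{r×n}, c₂, d ∈ ℝ^r, and assume there is a Slater point (x_S, y_S) with C₁x_S + c₂y_S < d. Fix data (x̂_i, ŷ_i) ∈ Ξ for i = 1, …, N. Then for (λ, α, w) ∈ ℝ₊ × ℝ^N × ℝ^n the following are equivalent: (a) for every i, sup_{(x,y) ∈ Ξ} [max{−ε(⟨w, x⟩ − y), (1 − ε)(⟨w, x⟩ − y)} − λ·(‖x − x̂_i‖ + κ|y − ŷ_i|)] ≤ α_i; (b) α ∈ ℝ₊^N and for every i there exist φ_i⁺, φ_i⁻ ∈ ℝ₊^r with: ε·(ŷ_i − ⟨w, x̂_i⟩)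 + ⟨φ_i⁺, d − C₁x̂_i − c₂ŷ_i⟩ ≤ α_i; (1 − ε)·(⟨w, x̂_i⟩ − ŷ_i) + ⟨φ_i⁻, d − C₁x̂_i − c₂ŷ_i⟩ ≤ α_i; N_*(C₁ᵀφ_i⁺ + ε·w, c₂ᵀφ_i⁺ − ε) ≤ λ; and N_*(C₁ᵀφ_i⁻ − (1 − ε)·w, c₂ᵀφ_i⁻ + 1 − ε) ≤ λ. -/
/-- Lagrange multipliers for a convex program with a Slater point. -/
theorem exists_lagrange_multiplier_of_slater {E ι : Type*} [AddCommGroup E] [Module ℝ E]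
    [Fintype ι] {f : E → ℝ} {g : ι → E → ℝ} (hf : ConvexOn ℝ Set.univ f)
    (hg : ∀ k, ConvexOn ℝ Set.univ (g k)) {s : E} (hs : ∀ k, g k s < 0)
    (h : ∀ x, (∀ k, g k x ≤ 0) → 0 ≤ f x) :
    ∃ φ : ι → ℝ, (∀ k, 0 ≤ φ k) ∧ ∀ x, 0 ≤ f x + ∑ k, φ k * g k x := by
  classical
  let A : Set (ℝ × (ι → ℝ)) := {q | ∃ x, f x < q.1 ∧ ∀ k, g k x < q.2 k}
  have hA_open : IsOpen A := by
    have : A = ⋃ x, {q : ℝ × (ι → ℝ) | f x < q.1 ∧ ∀ k, g k x < q.2 k} := by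
      ext q; simp [A]
    rw [this]
    refine isOpen_iUnion fun x => ?_
    simp only [Set.ofPred_and, Set.ofPred_forall]
    refine (isOpen_lt continuous_const continuous_fst).inter
      (isOpen_iInter_of_finite fun k => isOpen_lt continuous_const (by fun_prop))
  have hA_conv : Convex ℝ A := by
    rintro q ⟨x, hx, hx'⟩ q' ⟨y, hy, hy'⟩ a b ha hb hab
    have key : ∀ {u v u' v' : ℝ}, u < u' → v < v' → a * u + b * v < a * u' + b * v' := by
      intro u v u' v' huu hvv
      rcases ha.eq_or_lt with rfl | ha
      · obtain rfl : b = 1 := by linarith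
        linarith
      · have := mul_lt_mul_of_pos_left huu ha
        have := mul_le_mul_of_nonneg_left hvv.le hb
        linarith
    exact ⟨a • x + b • y,
      (hf.2 trivial trivial ha hb hab).trans_lt (key hx hy),
      fun k => ((hg k).2 trivial trivial ha hb hab).trans_lt (key (hx' k) (hy' k))⟩
  have hA_zero : (0 : ℝ × (ι → ℝ)) ∉ A := by
    rintro ⟨x, hx, hx'⟩
    exact (h x fun k => (hx' k).le).not_gt hx
  obtain ⟨F, hF⟩ := geometric_hahn_banach_open_point hA_conv hA_open hA_zero
  set m : ℝ := -F (1, 0) with hm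
  set μ : ι → ℝ := fun k => -F (0, Pi.single k 1) with hμ
  have hF_eq : ∀ t v, F (t, v) = -(m * t + ∑ k, μ k * v k) := by
    intro t v
    have hv : v = ∑ k, v k • (Pi.single k 1 : ι → ℝ) := by
      ext j; simp [Finset.sum_apply, Pi.single_apply]
    have hinr : F (0, v) = ∑ k, v k * F (0, Pi.single k 1) := by
      have : F (0, v) = (F.comp (ContinuousLinearMap.inr ℝ ℝ (ι → ℝ))) v := by simp
      rw [this]
      conv_lhs => rw [hv]
      simp [map_sum]
    have hsplit : ((t, v) : ℝ × (ι → ℝ)) = t • (1, 0) + (0, v) := by simp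
    rw [hsplit, map_add, map_smul, hinr]
    simp only [hm, hμ, smul_eq_mul, neg_mul, Finset.sum_neg_distrib]
    rw [Finset.sum_congr rfl fun k _ => mul_comm (v k) _]
    ring
  have hpos : ∀ x t (v : ι → ℝ), f x < t → (∀ k, g k x < v k) → 0 < m * t + ∑ k, μ k * v k := by
    intro x t v ht hv
    have := hF (t, v) ⟨x, ht, hv⟩
    rw [hF_eq, map_zero] at this
    linarith
  -- A functional bounded below along a ray has nonnegative slope.
  have slope : ∀ {a b : ℝ}, (∀ t : ℝ, 0 ≤ t → 0 < a + t * b) → 0 ≤ b := by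
    intro a b hab
    by_contra! hb
    have ha := hab 0 le_rfl
    have := hab (a / -b) (div_nonneg (by linarith) (by linarith))
    rw [div_mul_eq_mul_div, div_neg, mul_div_assoc, div_self hb.ne] at this
    linarith
  have hm_nonneg : 0 ≤ m := by
    refine slope (a := m * (f s + 1) + ∑ k, μ k * (g k s + 1)) fun t ht => ?_
    have := hpos s (f s + 1 + t) (fun k => g k s + 1) (by linarith) fun k => by linarith
    linarith
  have hμ_nonneg : ∀ k, 0 ≤ μ k := by
    intro k
    refine slope (a := m * (f s + 1) + ∑ k, μ k * (g k s + 1)) fun t ht => ?_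
    have := hpos s (f s + 1) (fun j => g j s + 1 + Pi.single (M := fun _ => ℝ) k t j) (by linarith)
      fun j => by
        have : 0 ≤ Pi.single (M := fun _ => ℝ) k t j := by
          rw [Pi.single_apply]; split_ifs <;> simp [ht]
        linarith
    simp only [mul_add _ (_ + _), Finset.sum_add_distrib, Pi.single_apply, mul_ite, mul_zero,
      Finset.sum_ite_eq', Finset.mem_univ, if_true] at this
    linarith
  have hm_pos : 0 < m := by
    refine hm_nonneg.lt_of_ne fun h0 => ?_
    have := hpos s (f s + 1) (fun k => g k s / 2) (by linarith) fun k => by linarith [hs k]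
    rw [← h0] at this
    have : ∑ k, μ k * (g k s / 2) ≤ 0 := Finset.sum_nonpos fun k _ =>
      mul_nonpos_of_nonneg_of_nonpos (hμ_nonneg k) (by linarith [hs k])
    linarith
  refine ⟨fun k => μ k / m, fun k => div_nonneg (hμ_nonneg k) hm_nonneg, fun x => ?_⟩
  have hlim : 0 ≤ m * f x + ∑ k, μ k * g k x := by
    set S := m + ∑ k, μ k with hS
    have hS_pos : 0 < S := add_pos_of_pos_of_nonneg hm_pos (Finset.sum_nonneg fun k _ => hμ_nonneg k)
    refine le_of_forall_pos_le_add fun η hη => ?_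
    have hd : 0 < η / S := div_pos hη hS_pos
    have := hpos x (f x + η / S) (fun k => g k x + η / S) (by linarith) fun k => by linarith
    simp only [mul_add, Finset.sum_add_distrib, ← Finset.sum_mul] at this
    have hη' : S * (η / S) = η := by field_simp
    rw [hS, add_mul, ← hS] at hη'
    linarith
  have : f x + ∑ k, μ k / m * g k x = (m * f x + ∑ k, μ k * g k x) / m := by
    rw [add_div, Finset.sum_div, mul_div_cancel_left₀ _ hm_pos.ne']
    congr 1
    exact Finset.sum_congr rfl fun k _ => by ring
  rw [this]
  exact div_nonneg hlim hm_nonneg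

/-- Dual description of an upper bound on a linear functional penalized by a multiple of a
seminorm distance, over a polyhedron with a Slater point. -/
theorem penalized_linear_le_on_polyhedron_iff {E ι : Type*} [AddCommGroup E] [Module ℝ E]
    [Fintype ι] (p : Seminorm ℝ E) (ℓ : E →ₗ[ℝ] ℝ) (C : ι → E →ₗ[ℝ] ℝ) (d : ι → ℝ)
    {s : E} (hs : ∀ k, C k s < d k) (z : E) {lam : ℝ} (hlam : 0 ≤ lam) (a : ℝ) :
    (∀ x, (∀ k, C k x ≤ d k) → ℓ x - lam * p (x - z) ≤ a) ↔
      ∃ φ : ι → ℝ, (∀ k, 0 ≤ φ k) ∧ ℓ z + ∑ k, φ k * (d k - C k z) ≤ a ∧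
        ∀ u, ∑ k, φ k * C k u - ℓ u ≤ lam * p u := by
  constructor
  · intro h
    have hf : ConvexOn ℝ Set.univ fun x => a - ℓ x + lam * p (x - z) := by
      have hp : ConvexOn ℝ Set.univ fun x => p (x - z) := by
        simpa [sub_eq_neg_add, Function.comp_def] using p.convexOn.translate_right (-z)
      exact ((convexOn_const a convex_univ).sub (ℓ.concaveOn convex_univ)).add (hp.smul hlam)
    have hg : ∀ k, ConvexOn ℝ Set.univ fun x => C k x - d k := fun k =>
      ((C k).convexOn convex_univ).sub (concaveOn_const (d k) convex_univ)
    obtain ⟨φ, hφ, hL⟩ := exists_lagrange_multiplier_of_slater hf hg (s := s)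
      (fun k => sub_neg.2 (hs k)) fun x hx => by
        have := h x fun k => sub_nonpos.1 (hx k)
        linarith
    have hray : ∀ (u : E) (t : ℝ), 0 ≤ t →
        0 ≤ (a - ℓ z - ∑ k, φ k * (d k - C k z)) + t * (lam * p u - (∑ k, φ k * C k u - ℓ u)) := by
      intro u t ht
      have hx := hL (z - t • u)
      have hpu : p (z - t • u - z) = t * p u := by
        rw [sub_sub_cancel_left, map_neg_eq_map, map_smul_eq_mul, Real.norm_of_nonneg ht]
      have hsum : ∑ k, φ k * (C k (z - t • u) - d k) =
          -(∑ k, φ k * (d k - C k z)) - t * ∑ k, φ k * C k u := by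
        rw [Finset.mul_sum, ← Finset.sum_neg_distrib, ← Finset.sum_sub_distrib]
        refine Finset.sum_congr rfl fun k _ => ?_
        simp only [map_sub, map_smul, smul_eq_mul]
        ring
      rw [hpu, hsum, map_sub, map_smul, smul_eq_mul] at hx
      linarith
    refine ⟨φ, hφ, ?_, fun u => ?_⟩
    · linarith [hray 0 0 le_rfl]
    · set b := a - ℓ z - ∑ k, φ k * (d k - C k z)
      set c := lam * p u - (∑ k, φ k * C k u - ℓ u) with hc
      by_contra! hlt
      have hc_neg : c < 0 := by linarith
      have hb : 0 ≤ b := by linarith [hray u 0 le_rfl]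
      have := hray u ((b + 1) / -c) (div_nonneg (by linarith) (by linarith))
      rw [← hc, div_mul_eq_mul_div, div_neg, mul_div_assoc, div_self hc_neg.ne] at this
      linarith
  · rintro ⟨φ, hφ, hz, hu⟩ x hx
    have h₁ := hu (z - x)
    rw [map_sub_rev p, map_sub ℓ] at h₁
    have h₂ : 0 ≤ ∑ k, φ k * (d k - C k x) :=
      Finset.sum_nonneg fun k _ => mul_nonneg (hφ k) (sub_nonneg.2 (hx k))
    have h₃ : ∑ k, φ k * (d k - C k x) =
        ∑ k, φ k * (d k - C k z) + ∑ k, φ k * C k (z - x) := by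
      rw [← Finset.sum_add_distrib]
      refine Finset.sum_congr rfl fun k _ => ?_
      rw [map_sub]
      ring
    linarith

/-- A bound on the dual norm is the same as a bound on the functional by a multiple of the norm. -/
theorem isLUB_unitBall_le_iff {E : Type*} [AddCommGroup E] [Module ℝ E] (p : Seminorm ℝ E)
    (hp : ∀ u, p u = 0 → u = 0) (f : E →ₗ[ℝ] ℝ) {b lam : ℝ} (hlam : 0 ≤ lam)
    (hb : IsLUB {ρ : ℝ | ∃ u, p u ≤ 1 ∧ ρ = f u} b) :
    b ≤ lam ↔ ∀ u, f u ≤ lam * p u := by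
  rw [isLUB_le_iff hb]
  constructor
  · intro h u
    rcases (apply_nonneg p u).eq_or_lt with h0 | h0
    · simp [hp u h0.symm]
    · have := h ⟨(p u)⁻¹ • u, by
        rw [map_smul_eq_mul, Real.norm_of_nonneg (inv_nonneg.2 h0.le), inv_mul_cancel₀ h0.ne'], rfl⟩
      rw [map_smul, smul_eq_mul, inv_mul_le_iff₀ h0] at this
      linarith
  · rintro h ρ ⟨u, hu, rfl⟩
    exact (h u).trans (mul_le_of_le_one_right hlam hu)

/-- The linear functional `(x, y) ↦ ⟨v.1, x⟩ + v.2 * y` on `ℝ^n × ℝ`. -/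
def pairingFunctional {n : ℕ} (v : (Fin n → ℝ) × ℝ) : (Fin n → ℝ) × ℝ →ₗ[ℝ] ℝ where
  toFun u := (∑ j, v.1 j * u.1 j) + v.2 * u.2
  map_add' u u' := by
    simp only [Prod.fst_add, Prod.snd_add, Pi.add_apply, mul_add, Finset.sum_add_distrib]
    ring
  map_smul' c u := by
    simp only [Prod.smul_fst, Prod.smul_snd, Pi.smul_apply, smul_eq_mul, RingHom.id_apply, mul_add,
      Finset.mul_sum, mul_left_comm]

theorem pairingFunctional_apply {n : ℕ} (v u : (Fin n → ℝ) × ℝ) :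
    pairingFunctional v u = (∑ j, v.1 j * u.1 j) + v.2 * u.2 := rfl

theorem pairingFunctional_smul {n : ℕ} (c : ℝ) (v u : (Fin n → ℝ) × ℝ) :
    pairingFunctional (c • v) u = c * pairingFunctional v u := by
  simp only [pairingFunctional_apply, Prod.smul_fst, Prod.smul_snd, Pi.smul_apply, smul_eq_mul,
    mul_add, Finset.mul_sum, mul_assoc]

theorem pairingFunctional_sum_sub {n r : ℕ} (φ : Fin r → ℝ) (v : Fin r → (Fin n → ℝ) × ℝ)
    (q u : (Fin n → ℝ) × ℝ) :
    pairingFunctional (fun j => (∑ k, (v k).1 j * φ k) - q.1 j, (∑ k, (v k).2 * φ k) - q.2) u =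
      ∑ k, φ k * pairingFunctional (v k) u - pairingFunctional q u := by
  simp only [pairingFunctional_apply, mul_add, sub_mul, Finset.sum_add_distrib,
    Finset.sum_sub_distrib, Finset.sum_mul, Finset.mul_sum]
  rw [Finset.sum_comm]
  simp only [mul_assoc, mul_left_comm]
  ring

/-- Corollary (Quantile Regression) of the paper: characterization of `(λ, α, w) ∈ Ω_s` for
distributionally robust quantile regression with the pinball loss
`L(z) = max{−εz, (1 − ε)z}`, polyhedral support set `Ξ = {(x, y) : C₁x + c₂y ≤ d}` admitting
a Slater point, and regression transport cost `d_R((x,y),(x',y')) = ‖x − x'‖ + κ|y − y'|`.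
Here `nn` is a norm on `ℝ^n` and `dN` is the dual norm of the norm `N(x, y) = nn x + κ|y|`
on `ℝ^n × ℝ`. -/
theorem drfl_quantile_regression_omega
    (n N r : ℕ) (κ ε : ℝ) (hκ : 0 < κ) (hε₀ : 0 ≤ ε) (hε₁ : ε ≤ 1)
    (nn : (Fin n → ℝ) → ℝ)
    (hnn_nonneg : ∀ x, 0 ≤ nn x)
    (hnn_def : ∀ x, nn x = 0 ↔ x = 0)
    (hnn_add : ∀ x y, nn (x + y) ≤ nn x + nn y)
    (hnn_smul : ∀ (c : ℝ) x, nn (c • x) = |c| * nn x)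
    (dN : ((Fin n → ℝ) × ℝ) → ℝ)
    (hdN : ∀ v : (Fin n → ℝ) × ℝ, IsLUB
      {ρ : ℝ | ∃ u : (Fin n → ℝ) × ℝ, nn u.1 + κ * |u.2| ≤ 1 ∧
        ρ = (∑ j, v.1 j * u.1 j) + v.2 * u.2} (dN v))
    (C₁ : Fin r → Fin n → ℝ) (c₂ d : Fin r → ℝ)
    (xS : Fin n → ℝ) (yS : ℝ)
    (hSlater : ∀ k, (∑ j, C₁ k j * xS j) + c₂ k * yS < d k)
    (xhat : Fin N → Fin n → ℝ) (yhat : Fin N → ℝ)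
    (hdata : ∀ i k, (∑ j, C₁ k j * xhat i j) + c₂ k * yhat i ≤ d k)
    (lam : ℝ) (hlam : 0 ≤ lam) (α : Fin N → ℝ) (w : Fin n → ℝ) :
    (∀ i, ∀ (x : Fin n → ℝ) (y : ℝ),
        (∀ k, (∑ j, C₁ k j * x j) + c₂ k * y ≤ d k) →
        max (-ε * ((∑ j, w j * x j) - y)) ((1 - ε) * ((∑ j, w j * x j) - y))
          - lam * (nn (x - xhat i) + κ * |y - yhat i|) ≤ α i)
    ↔
    ((∀ i, 0 ≤ α i) ∧ ∀ i, ∃ φp φm : Fin r → ℝ,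
      (∀ k, 0 ≤ φp k) ∧ (∀ k, 0 ≤ φm k) ∧
      ε * (yhat i - (∑ j, w j * xhat i j)) +
        (∑ k, φp k * (d k - (∑ j, C₁ k j * xhat i j) - c₂ k * yhat i)) ≤ α i ∧
      (1 - ε) * ((∑ j, w j * xhat i j) - yhat i) +
        (∑ k, φm k * (d k - (∑ j, C₁ k j * xhat i j) - c₂ k * yhat i)) ≤ α i ∧
      dN (fun j => (∑ k, C₁ k j * φp k) + ε * w j, (∑ k, c₂ k * φp k) - ε) ≤ lam ∧
      dN (fun j => (∑ k, C₁ k j * φm k) - (1 - ε) * w j,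
        (∑ k, c₂ k * φm k) + 1 - ε) ≤ lam) := by
  let p : Seminorm ℝ ((Fin n → ℝ) × ℝ) := Seminorm.of (fun u => nn u.1 + κ * |u.2|)
    (fun u v => by
      have h₁ := hnn_add u.1 v.1
      have h₂ := mul_le_mul_of_nonneg_left (abs_add_le u.2 v.2) hκ.le
      simp only [Prod.fst_add, Prod.snd_add]
      linarith)
    (fun c u => by
      simp only [Prod.smul_fst, Prod.smul_snd, hnn_smul, smul_eq_mul, abs_mul, Real.norm_eq_abs]
      ring)
  have hp_apply : ∀ u, p u = nn u.1 + κ * |u.2| := fun _ => rfl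
  have hp_def : ∀ u, p u = 0 → u = 0 := by
    intro u hu
    rw [hp_apply] at hu
    have h₁ := hnn_nonneg u.1
    have h₂ : 0 ≤ κ * |u.2| := by positivity
    refine Prod.ext ((hnn_def u.1).1 (by linarith)) ?_
    have : κ * |u.2| = 0 := by linarith
    simpa [hκ.ne'] using this
  have hdN_le : ∀ v, dN v ≤ lam ↔ ∀ u, pairingFunctional v u ≤ lam * p u := fun v =>
    isLUB_unitBall_le_iff p hp_def (pairingFunctional v) hlam (hdN v)
  -- Duality for the linear loss `c * (⟨w, x⟩ - y)`, one slope of the pinball loss at a time.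
  have duality : ∀ (c : ℝ) (i : Fin N),
      (∀ (x : Fin n → ℝ) (y : ℝ), (∀ k, (∑ j, C₁ k j * x j) + c₂ k * y ≤ d k) →
        c * ((∑ j, w j * x j) - y) - lam * (nn (x - xhat i) + κ * |y - yhat i|) ≤ α i) ↔
      ∃ φ : Fin r → ℝ, (∀ k, 0 ≤ φ k) ∧
        c * ((∑ j, w j * xhat i j) - yhat i) +
          (∑ k, φ k * (d k - (∑ j, C₁ k j * xhat i j) - c₂ k * yhat i)) ≤ α i ∧
        dN (fun j => (∑ k, C₁ k j * φ k) - c * w j, (∑ k, c₂ k * φ k) + c) ≤ lam := by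
    intro c i
    have hloss : ∀ x y, pairingFunctional (c • (w, (-1 : ℝ))) (x, y) =
        c * ((∑ j, w j * x j) - y) := by
      intro x y
      rw [pairingFunctional_smul, pairingFunctional_apply]
      ring
    have key := penalized_linear_le_on_polyhedron_iff p (pairingFunctional (c • (w, (-1 : ℝ))))
      (fun k => pairingFunctional (C₁ k, c₂ k)) d (s := (xS, yS)) hSlater (xhat i, yhat i)
      hlam (α i)
    simp only [Prod.forall, hloss] at key
    refine key.trans (exists_congr fun φ => and_congr_right fun _ => and_congr ?_ ?_)
    · simp only [pairingFunctional_apply, sub_sub]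
    · rw [hdN_le, Prod.forall]
      refine forall_congr' fun x => forall_congr' fun y => ?_
      have := pairingFunctional_sum_sub φ (fun k => (C₁ k, c₂ k)) (c • (w, (-1 : ℝ))) (x, y)
      simp only [hloss, Prod.smul_fst, Prod.smul_snd, Pi.smul_apply, smul_eq_mul, mul_neg, mul_one,
        sub_neg_eq_add] at this
      rw [this]
  have hplus : ∀ i, ε * (yhat i - ∑ j, w j * xhat i j) = -ε * ((∑ j, w j * xhat i j) - yhat i) :=
    fun i => by ring
  constructor
  · intro h
    refine ⟨fun i => ?_, fun i => ?_⟩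
    · have := h i (xhat i) (yhat i) (hdata i)
      rw [sub_self, (hnn_def 0).2 rfl, sub_self, abs_zero, mul_zero, add_zero, mul_zero,
        sub_zero] at this
      refine le_trans ?_ this
      rcases le_total 0 ((∑ j, w j * xhat i j) - yhat i) with h0 | h0
      · exact le_max_of_le_right (mul_nonneg (by linarith) h0)
      · exact le_max_of_le_left (mul_nonneg_of_nonpos_of_nonpos (by linarith) h0)
    · obtain ⟨φp, hp0, hp1, hp2⟩ := (duality (-ε) i).1 fun x y hxy =>
        (sub_le_sub_right (le_max_left _ _) _).trans (h i x y hxy)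
      obtain ⟨φm, hm0, hm1, hm2⟩ := (duality (1 - ε) i).1 fun x y hxy =>
        (sub_le_sub_right (le_max_right _ _) _).trans (h i x y hxy)
      refine ⟨φp, φm, hp0, hm0, by rw [hplus]; exact hp1, hm1, ?_, ?_⟩
      · simpa only [neg_mul, sub_neg_eq_add, ← sub_eq_add_neg] using hp2
      · simpa only [add_sub_assoc] using hm2
  · rintro ⟨-, h⟩ i x y hxy
    obtain ⟨φp, φm, hp0, hm0, hp1, hm1, hp2, hm2⟩ := h i
    rw [sub_le_iff_le_add]
    refine max_le (sub_le_iff_le_add.1 ?_) (sub_le_iff_le_add.1 ?_)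
    · refine (duality (-ε) i).2 ⟨φp, hp0, by rw [← hplus]; exact hp1, ?_⟩ x y hxy
      simpa only [neg_mul, sub_neg_eq_add, ← sub_eq_add_neg] using hp2
    · refine (duality (1 - ε) i).2 ⟨φm, hm0, hm1, ?_⟩ x y hxy
      simpa only [add_sub_assoc] using hm2
end
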